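/- arXiv:0906.5607 — 5 statements merged into one kernel-verified Lean document; each statement's English description precedes it below -/
import Mathlib

section
/- Let ℓ₁, ℓ₂ ∈ ℝ with ℓ₁² + ℓ₂² < 1, let φ ∈ (−π/2, π/2) be defined by sin φ = −ℓ₂/√(1 − ℓ₁²), and let A be the 2×2 real matrix [[√((1−ℓ₁)/2)·cos φ, √((1−ℓ₁)/2)·sin φ],[0, √((1+ℓ₁)/2)]]. Then det A > 0, and for every symmetric 2×2 real matrix b satisfying b₁₁ + b₂₂ = ℓ₁(b₁₁ − b₂₂) + 2ℓ₂·b₁₂, the matrix ᵗA·b·A is symmetric and traceless. -/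
open Matrix Real

/-- Let `ℓ₁² + ℓ₂² < 1`, let `φ ∈ (−π/2, π/2)` satisfy `sin φ = −ℓ₂/√(1 − ℓ₁²)`, and let
`A = [[√((1−ℓ₁)/2)·cos φ, √((1−ℓ₁)/2)·sin φ], [0, √((1+ℓ₁)/2)]]`. Then `det A > 0`, and
for every symmetric `b` with `b₁₁ + b₂₂ = ℓ₁(b₁₁ − b₂₂) + 2ℓ₂·b₁₂`, the matrix `ᵗA·b·A`
is symmetric and traceless. -/
theorem second_order_frame_normalization (ℓ₁ ℓ₂ : ℝ) (h : ℓ₁ ^ 2 + ℓ₂ ^ 2 < 1)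
    (φ : ℝ) (hφ : φ ∈ Set.Ioo (-(π / 2)) (π / 2))
    (hsin : Real.sin φ = -ℓ₂ / Real.sqrt (1 - ℓ₁ ^ 2)) :
    0 < (!![Real.sqrt ((1 - ℓ₁) / 2) * Real.cos φ, Real.sqrt ((1 - ℓ₁) / 2) * Real.sin φ;
            0, Real.sqrt ((1 + ℓ₁) / 2)]).det ∧
    ∀ b : Matrix (Fin 2) (Fin 2) ℝ, b.IsSymm →
      b 0 0 + b 1 1 = ℓ₁ * (b 0 0 - b 1 1) + 2 * ℓ₂ * b 0 1 →
      ((!![Real.sqrt ((1 - ℓ₁) / 2) * Real.cos φ, Real.sqrt ((1 - ℓ₁) / 2) * Real.sin φ;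
           0, Real.sqrt ((1 + ℓ₁) / 2)])ᵀ * b *
        !![Real.sqrt ((1 - ℓ₁) / 2) * Real.cos φ, Real.sqrt ((1 - ℓ₁) / 2) * Real.sin φ;
           0, Real.sqrt ((1 + ℓ₁) / 2)]).IsSymm ∧
      Matrix.trace
        ((!![Real.sqrt ((1 - ℓ₁) / 2) * Real.cos φ, Real.sqrt ((1 - ℓ₁) / 2) * Real.sin φ;
             0, Real.sqrt ((1 + ℓ₁) / 2)])ᵀ * b *
          !![Real.sqrt ((1 - ℓ₁) / 2) * Real.cos φ, Real.sqrt ((1 - ℓ₁) / 2) * Real.sin φ;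
             0, Real.sqrt ((1 + ℓ₁) / 2)]) = 0 := by
  have hlo : 0 < 1 - ℓ₁ := by nlinarith [sq_nonneg ℓ₂, sq_nonneg (1 - ℓ₁)]
  have hhi : 0 < 1 + ℓ₁ := by nlinarith [sq_nonneg ℓ₂, sq_nonneg (1 + ℓ₁)]
  have hcos : 0 < Real.cos φ := Real.cos_pos_of_mem_Ioo hφ
  have hcs := Real.sin_sq_add_cos_sq φ
  have hp : 0 < Real.sqrt ((1 - ℓ₁) / 2) := Real.sqrt_pos.mpr (by linarith)
  have hq : 0 < Real.sqrt ((1 + ℓ₁) / 2) := Real.sqrt_pos.mpr (by linarith)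
  have hp2 : Real.sqrt ((1 - ℓ₁) / 2) ^ 2 = (1 - ℓ₁) / 2 := Real.sq_sqrt (by linarith)
  have hq2 : Real.sqrt ((1 + ℓ₁) / 2) ^ 2 = (1 + ℓ₁) / 2 := Real.sq_sqrt (by linarith)
  have hr : Real.sqrt (1 - ℓ₁ ^ 2)
      = 2 * (Real.sqrt ((1 - ℓ₁) / 2) * Real.sqrt ((1 + ℓ₁) / 2)) := by
    rw [Real.sqrt_eq_iff_mul_self_eq_of_pos (by positivity)]
    calc _ = 4 * (Real.sqrt ((1 - ℓ₁) / 2) ^ 2 * Real.sqrt ((1 + ℓ₁) / 2) ^ 2) := by ring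
      _ = _ := by rw [hp2, hq2]; ring
  rw [hr, eq_div_iff (by positivity)] at hsin
  generalize Real.sqrt ((1 - ℓ₁) / 2) = p at *
  generalize Real.sqrt ((1 + ℓ₁) / 2) = q at *
  generalize Real.sin φ = s at *
  generalize Real.cos φ = c at *
  refine ⟨?_, fun b hb hrel => ⟨?_, ?_⟩⟩
  · rw [Matrix.det_fin_two_of]
    have : 0 < p * c * q := by positivity
    linarith
  · unfold Matrix.IsSymm
    rw [Matrix.transpose_mul, Matrix.transpose_mul, Matrix.transpose_transpose, hb.eq,
      Matrix.mul_assoc]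
  · have h10 : b 1 0 = b 0 1 := hb.apply 0 1
    simp [Matrix.trace_fin_two, Matrix.mul_apply, Fin.sum_univ_two, h10]
    linear_combination b 0 0 * p ^ 2 * hcs + b 0 0 * hp2 + b 1 1 * hq2 + b 0 1 * hsin
      + hrel / 2
end

section
/- Let A be a 2×2 real matrix with det A > 0. Then ᵗA·b·A is traceless for every traceless symmetric 2×2 real matrix b if and only if ᵗA·A = r²·I₂ for some real r > 0. -/
open Matrix

/-- Let `A` be a `2×2` real matrix with `det A > 0`. Then `ᵗA·b·A` is traceless for every
traceless symmetric `2×2` real matrix `b` iff `ᵗA·A = r²·I₂` for some real `r > 0`. -/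
theorem conformal_iff_preserves_traceless (A : Matrix (Fin 2) (Fin 2) ℝ)
    (hA : 0 < A.det) :
    (∀ b : Matrix (Fin 2) (Fin 2) ℝ, b.IsSymm → Matrix.trace b = 0 →
      Matrix.trace (Aᵀ * b * A) = 0) ↔
    (∃ r : ℝ, 0 < r ∧ Aᵀ * A = r ^ 2 • (1 : Matrix (Fin 2) (Fin 2) ℝ)) := by
  constructor
  · intro h
    have h1 := h !![1, 0; 0, -1] (by ext i j; fin_cases i <;> fin_cases j <;> simp)
      (by simp [Matrix.trace_fin_two])
    have h2 := h !![0, 1; 1, 0] (by ext i j; fin_cases i <;> fin_cases j <;> simp)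
      (by simp [Matrix.trace_fin_two])
    have hd := hA
    rw [Matrix.det_fin_two] at hd
    simp [Matrix.trace_fin_two, Matrix.mul_apply, Fin.sum_univ_two] at h1 h2
    have hr : Real.sqrt A.det ^ 2 = A.det := Real.sq_sqrt hA.le
    refine ⟨Real.sqrt A.det, Real.sqrt_pos.2 hA, ?_⟩
    rw [hr, Matrix.det_fin_two]
    have key : ∀ a b c d : ℝ, 0 < a * d - b * c → a ^ 2 + b ^ 2 = c ^ 2 + d ^ 2 →
        a * c + b * d = 0 → d = a ∧ c = -b := by
      intro a b c d hd h1 h2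
      have hN : (a * d - b * c) ^ 2 = (a ^ 2 + b ^ 2) ^ 2 := by
        linear_combination (-(a ^ 2 + b ^ 2)) * h1 - (a * c + b * d) * h2
      have hN' : a * d - b * c = a ^ 2 + b ^ 2 :=
        (pow_left_inj₀ hd.le (by positivity) two_ne_zero).1 hN
      have hs : (d - a) ^ 2 + (c + b) ^ 2 = 0 := by linear_combination -2 * hN' - h1
      have e1 : (d - a) ^ 2 = 0 := by nlinarith [sq_nonneg (d - a), sq_nonneg (c + b)]
      have e2 : (c + b) ^ 2 = 0 := by nlinarith [sq_nonneg (d - a), sq_nonneg (c + b)]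
      have e1' := pow_eq_zero_iff two_ne_zero |>.1 e1
      have e2' := pow_eq_zero_iff two_ne_zero |>.1 e2
      constructor <;> linarith
    obtain ⟨k1, k2⟩ := key (A 0 0) (A 0 1) (A 1 0) (A 1 1) hd (by linarith) (by linarith)
    ext i j
    fin_cases i <;> fin_cases j <;>
      simp [Matrix.mul_apply, Fin.sum_univ_two, k1, k2] <;> ring
  · rintro ⟨r, hr, h⟩ b - hb
    have h0 : r ^ 2 ≠ 0 := by positivity
    have h1 : ((r ^ 2)⁻¹ • Aᵀ) * A = 1 := by
      rw [Matrix.smul_mul, h, smul_smul, inv_mul_cancel₀ h0, one_smul]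
    have h2 : A * ((r ^ 2)⁻¹ • Aᵀ) = 1 := mul_eq_one_comm.1 h1
    have h3 : A * Aᵀ = r ^ 2 • (1 : Matrix (Fin 2) (Fin 2) ℝ) := by
      rw [← h2, Matrix.mul_smul, smul_smul, mul_inv_cancel₀ h0, one_smul]
    rw [Matrix.trace_mul_comm, ← Matrix.mul_assoc, h3]
    simp [hb]
end

section
/- Let r > 0, s ∈ ℝ, and A = r·[[cos s, −sin s],[sin s, cos s]]. For a traceless symmetric 2×2 real matrix b, define φ(b) = ½(b₁₁ − b₂₂) + i·b₁₂ ∈ ℂ. Then ᵗA·b·A is again traceless symmetric and φ(ᵗA·b·A) = r²·e^{−2is}·φ(b). -/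
open Matrix

/-- For a traceless symmetric `2×2` real matrix `b`, `φ(b) = ½(b₁₁ − b₂₂) + i·b₁₂ ∈ ℂ`. -/
noncomputable def phiC (b : Matrix (Fin 2) (Fin 2) ℝ) : ℂ :=
  ((b 0 0 - b 1 1) / 2 : ℝ) + Complex.I * (b 0 1 : ℝ)

/-- Let `r > 0`, `s ∈ ℝ`, and `A = r·[[cos s, −sin s],[sin s, cos s]]`. For a traceless
symmetric `2×2` real matrix `b`, `ᵗA·b·A` is again traceless symmetric and
`φ(ᵗA·b·A) = r²·e^{−2is}·φ(b)`. -/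
theorem second_order_change_of_omega (r s : ℝ) (hr : 0 < r)
    (b : Matrix (Fin 2) (Fin 2) ℝ) (hb : b.IsSymm) (htr : Matrix.trace b = 0) :
    ((r • !![Real.cos s, -Real.sin s; Real.sin s, Real.cos s])ᵀ * b *
        (r • !![Real.cos s, -Real.sin s; Real.sin s, Real.cos s])).IsSymm ∧
    Matrix.trace ((r • !![Real.cos s, -Real.sin s; Real.sin s, Real.cos s])ᵀ * b *
        (r • !![Real.cos s, -Real.sin s; Real.sin s, Real.cos s])) = 0 ∧
    phiC ((r • !![Real.cos s, -Real.sin s; Real.sin s, Real.cos s])ᵀ * b *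
        (r • !![Real.cos s, -Real.sin s; Real.sin s, Real.cos s])) =
      (r : ℂ) ^ 2 * Complex.exp (-2 * (s : ℂ) * Complex.I) * phiC b := by
  have h10 : b 1 0 = b 0 1 := hb.apply 0 1
  have h11 : b 1 1 = -b 0 0 := by
    rw [Matrix.trace_fin_two] at htr
    linarith
  have hexp : Complex.exp (-2 * (s : ℂ) * Complex.I) =
      ((Real.cos s : ℂ) - Real.sin s * Complex.I) ^ 2 := by
    have h1 : -2 * (s : ℂ) * Complex.I = ((2 : ℕ) : ℂ) * (((-s : ℝ) : ℂ) * Complex.I) := by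
      push_cast
      ring
    rw [h1, Complex.exp_nat_mul, Complex.exp_mul_I, ← Complex.ofReal_cos, ← Complex.ofReal_sin,
      Real.cos_neg, Real.sin_neg]
    push_cast
    ring
  refine ⟨?_, ?_, ?_⟩
  · unfold Matrix.IsSymm
    rw [Matrix.transpose_mul, Matrix.transpose_mul, Matrix.transpose_transpose, hb.eq,
      Matrix.mul_assoc]
  · simp only [Matrix.trace_fin_two, Matrix.mul_apply, Fin.sum_univ_two, Matrix.transpose_apply,
      Matrix.smul_apply, h10, h11]
    simp
    ring
  · rw [hexp]
    simp only [phiC, Matrix.mul_apply, Fin.sum_univ_two, Matrix.transpose_apply,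
      Matrix.smul_apply, h10, h11]
    apply Complex.ext <;> simp [pow_two, -Complex.ofReal_cos, -Complex.ofReal_sin] <;> ring
end

section
/- Let U ⊆ ℂ be open and let t, h, p : U → ℂ be smooth functions satisfying the integrability equations (i) t_z̄ = t̄·h, (ii) p_z̄ = 2h·h̄_z − i(|h|²)_z, and (iii) p̄·h − p·h̄ = h_z̄z̄ − h̄_zz. Let w : U → ℂ be holomorphic and satisfy Re(w)·Im(h) = Im(w)·Re(h) at every point of U. Then the functions t, h, p − w also satisfy equations (i), (ii), (iii). -/
open Complex

/-- The Wirtinger derivative `u_z = ½(u_x − i·u_y)` of `u : ℂ → ℂ`, where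
`u_x = fderiv ℝ u z 1` and `u_y = fderiv ℝ u z i`. -/
noncomputable def wz (u : ℂ → ℂ) (z : ℂ) : ℂ :=
  (fderiv ℝ u z 1 - Complex.I * fderiv ℝ u z Complex.I) / 2

/-- The Wirtinger derivative `u_z̄ = ½(u_x + i·u_y)` of `u : ℂ → ℂ`. -/
noncomputable def wzbar (u : ℂ → ℂ) (z : ℂ) : ℂ :=
  (fderiv ℝ u z 1 + Complex.I * fderiv ℝ u z Complex.I) / 2

/-- The integrability equations (INTEQ) for the invariant functions `t, h, p` on `U`:
(i) `t_z̄ = t̄·h`, (ii) `p_z̄ = 2h·h̄_z − i(|h|²)_z`, (iii) `p̄·h − p·h̄ = h_z̄z̄ − h̄_zz`. -/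
def INTEQ (U : Set ℂ) (t h p : ℂ → ℂ) : Prop :=
  (∀ z ∈ U, wzbar t z = (starRingEnd ℂ) (t z) * h z) ∧
  (∀ z ∈ U, wzbar p z =
      2 * h z * wz (fun w => (starRingEnd ℂ) (h w)) z -
        Complex.I * wz (fun w => ((Complex.normSq (h w) : ℝ) : ℂ)) z) ∧
  (∀ z ∈ U, (starRingEnd ℂ) (p z) * h z - p z * (starRingEnd ℂ) (h z) =
      wzbar (wzbar h) z - wz (wz (fun w => (starRingEnd ℂ) (h w))) z)

/-- If smooth `t, h, p` on an open `U ⊆ ℂ` satisfy the integrability equations, and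
`w` is holomorphic on `U` with `Re(w)·Im(h) = Im(w)·Re(h)` on `U`, then `t, h, p − w`
also satisfy the integrability equations. -/
theorem inteq_of_sub_holomorphic (U : Set ℂ) (hU : IsOpen U) (t h p w : ℂ → ℂ)
    (ht : ContDiffOn ℝ (⊤ : ℕ∞) t U) (hh : ContDiffOn ℝ (⊤ : ℕ∞) h U) (hp : ContDiffOn ℝ (⊤ : ℕ∞) p U)
    (hint : INTEQ U t h p)
    (hw : DifferentiableOn ℂ w U)
    (hlin : ∀ z ∈ U, (w z).re * (h z).im = (w z).im * (h z).re) :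
    INTEQ U t h (fun z => p z - w z) := by
  obtain ⟨h1, h2, h3⟩ := hint
  refine ⟨h1, fun z hz => ?_, fun z hz => ?_⟩
  · have hpz : DifferentiableAt ℝ p z :=
      (hp.differentiableOn (by simp)).differentiableAt (hU.mem_nhds hz)
    have hwz : DifferentiableAt ℂ w z := hw.differentiableAt (hU.mem_nhds hz)
    have hwr : DifferentiableAt ℝ w z := hwz.restrictScalars ℝ
    have hI : fderiv ℝ w z Complex.I = Complex.I * fderiv ℝ w z 1 := by
      rw [hwz.fderiv_restrictScalars ℝ]
      have := (fderiv ℂ w z).map_smul Complex.I 1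
      simpa using this
    rw [← h2 z hz]
    have hs : fderiv ℝ (fun z => p z - w z) z = fderiv ℝ p z - fderiv ℝ w z :=
      fderiv_fun_sub hpz hwr
    unfold wzbar
    rw [hs]
    simp only [ContinuousLinearMap.sub_apply]
    rw [hI]
    linear_combination (-(fderiv ℝ w z 1) / 2) * Complex.I_mul_I
  · rw [← h3 z hz]
    have key : (starRingEnd ℂ) (w z) * h z - w z * (starRingEnd ℂ) (h z) = 0 := by
      have := hlin z hz
      apply Complex.ext
      · simp
      · simp
        linear_combination 2 * this
    simp only [map_sub]
    linear_combination -key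
end

section
/- Let c₁, c₂, m₁, m₂ ∈ ℝ and define t : ℂ → ℂ by t(x + iy) = (c₁e^{2x} + m₁e^{2y} + m₂e^{−2y}) + i(c₂e^{−2x} − m₁e^{2y} + m₂e^{−2y}). Then t satisfies t_z̄ = t̄ on all of ℂ, i.e., ½(t_x + i·t_y) = conj(t) at every point. -/
open Complex

/-- For real constants `c₁, c₂, m₁, m₂`, the function
`t(x+iy) = (c₁e^{2x} + m₁e^{2y} + m₂e^{−2y}) + i(c₂e^{−2x} − m₁e^{2y} + m₂e^{−2y})`
satisfies `t_z̄ = t̄`, i.e. `½(t_x + i·t_y) = conj t`, on all of `ℂ`. -/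
theorem exponential_ansatz_solves_tzbar (c₁ c₂ m₁ m₂ : ℝ) :
    ∀ z : ℂ,
      wzbar (fun w : ℂ =>
        (((c₁ * Real.exp (2 * w.re) + m₁ * Real.exp (2 * w.im) +
            m₂ * Real.exp (-2 * w.im) : ℝ) : ℂ) +
          Complex.I * ((c₂ * Real.exp (-2 * w.re) - m₁ * Real.exp (2 * w.im) +
            m₂ * Real.exp (-2 * w.im) : ℝ) : ℂ))) z =
      (starRingEnd ℂ)
        ((((c₁ * Real.exp (2 * z.re) + m₁ * Real.exp (2 * z.im) +
            m₂ * Real.exp (-2 * z.im) : ℝ) : ℂ) +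
          Complex.I * ((c₂ * Real.exp (-2 * z.re) - m₁ * Real.exp (2 * z.im) +
            m₂ * Real.exp (-2 * z.im) : ℝ) : ℂ))) := by
  intro z
  have hre : HasFDerivAt (fun w : ℂ => w.re) Complex.reCLM z := Complex.reCLM.hasFDerivAt
  have him : HasFDerivAt (fun w : ℂ => w.im) Complex.imCLM z := Complex.imCLM.hasFDerivAt
  have e1 := ((hre.const_mul (2 : ℝ)).exp).const_mul c₁
  have e2 := ((him.const_mul (2 : ℝ)).exp).const_mul m₁
  have e3 := ((him.const_mul (-2 : ℝ)).exp).const_mul m₂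
  have e4 := ((hre.const_mul (-2 : ℝ)).exp).const_mul c₂
  have h1 := Complex.ofRealCLM.hasFDerivAt.comp z ((e1.add e2).add e3)
  have h2 := (Complex.ofRealCLM.hasFDerivAt.comp z ((e4.sub e2).add e3)).const_mul Complex.I
  have h := (h1.add h2).fderiv
  unfold wzbar
  erw [h]
  clear h h1 h2 e1 e2 e3 e4
  generalize Real.exp (2 * z.re) = a
  generalize Real.exp (2 * z.im) = b
  generalize Real.exp (-2 * z.re) = c
  generalize Real.exp (-2 * z.im) = d
  apply Complex.ext
  · simp
    ring
  · simp
    ring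
end
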